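/- arXiv:2312.07773 — 4 statements merged into one kernel-verified Lean document; each statement's English description precedes it below -/
import Mathlib

section
/- Fix real ε > 0 and r > 0, and define t_n = ε^{2n} (4n)! / (2^{4n} (2n)! r^{2n}) for n ∈ ℕ. If N ∈ ℕ is a global minimizer of the sequence (t_n), i.e. t_N ≤ t_n for all n ∈ ℕ, then |N - r/(2ε)| ≤ 1. In particular the optimal truncation point of the asymptotic series satisfies N_opt = r/(2ε) + O(1). -/
theorem opt_trunc_aux (ε r : ℝ) (hr : 0 < r)
    (t : ℕ → ℝ)
    (ht : ∀ n : ℕ, t n = ε ^ (2 * n) * (Nat.factorial (4 * n) : ℝ) /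
      (2 ^ (4 * n) * (Nat.factorial (2 * n) : ℝ) * r ^ (2 * n))) (n : ℕ) :
    t (n + 1) * (4 * r ^ 2) = t n * (ε ^ 2 * ((4 * n + 1) * (4 * n + 3))) := by
  rw [ht, ht]
  have h4 : (Nat.factorial (4 * (n + 1)) : ℝ) =
      (4 * n + 4) * (4 * n + 3) * (4 * n + 2) * (4 * n + 1) * Nat.factorial (4 * n) := by
    rw [show 4 * (n + 1) = 4 * n + 1 + 1 + 1 + 1 by ring]
    simp only [Nat.factorial_succ]
    push_cast
    ring
  have h2 : (Nat.factorial (2 * (n + 1)) : ℝ) =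
      (2 * n + 2) * (2 * n + 1) * Nat.factorial (2 * n) := by
    rw [show 2 * (n + 1) = 2 * n + 1 + 1 by ring]
    simp only [Nat.factorial_succ]
    push_cast
    ring
  rw [h4, h2, show ε ^ (2 * (n + 1)) = ε ^ (2 * n) * ε ^ 2 by ring,
    show r ^ (2 * (n + 1)) = r ^ (2 * n) * r ^ 2 by ring,
    show (2 : ℝ) ^ (4 * (n + 1)) = 2 ^ (4 * n) * 16 by ring]
  have hF : (Nat.factorial (2 * n) : ℝ) ≠ 0 := by positivity
  have hR : r ^ (2 * n) ≠ 0 := by positivity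
  have hT : (2 : ℝ) ^ (4 * n) ≠ 0 := by positivity
  have h1 : (2 * n + 2 : ℝ) ≠ 0 := by positivity
  have h1' : (2 * n + 1 : ℝ) ≠ 0 := by positivity
  have hr' := hr.ne'
  generalize (2 : ℝ) ^ (4 * n) = T at *
  generalize r ^ (2 * n) = R at *
  generalize ε ^ (2 * n) = E at *
  generalize (Nat.factorial (2 * n) : ℝ) = F at *
  generalize (Nat.factorial (4 * n) : ℝ) = G at *
  rw [div_mul_eq_mul_div, div_mul_eq_mul_div, div_eq_div_iff (by positivity) (by positivity)]
  ring

/-- A global minimizer `N` of the term moduli `t_n = ε^{2n}(4n)!/(2^{4n}(2n)! r^{2n})`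
of the divergent asymptotic series satisfies `|N - r/(2ε)| ≤ 1`, i.e. the optimal
truncation point is `N_opt = r/(2ε) + O(1)`. -/
theorem optimal_truncation_location (ε r : ℝ) (hε : 0 < ε) (hr : 0 < r)
    (t : ℕ → ℝ)
    (ht : ∀ n : ℕ, t n = ε ^ (2 * n) * (Nat.factorial (4 * n) : ℝ) /
      (2 ^ (4 * n) * (Nat.factorial (2 * n) : ℝ) * r ^ (2 * n)))
    (N : ℕ) (hN : ∀ n : ℕ, t N ≤ t n) :
    |(N : ℝ) - r / (2 * ε)| ≤ 1 := by
  have hpos : ∀ n, 0 < t n := fun n => by rw [ht]; positivity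
  obtain ⟨x, hx⟩ : ∃ x, x = r / (2 * ε) := ⟨_, rfl⟩
  have hx0 : 0 < x := by rw [hx]; positivity
  have hrx : r = 2 * ε * x := by rw [hx]; field_simp
  have key : ∀ n, t (n + 1) * (16 * x ^ 2) = t n * ((4 * n + 1) * (4 * n + 3)) := by
    intro n
    have h := opt_trunc_aux ε r hr t ht n
    have h2 : ε ^ 2 ≠ 0 := by positivity
    apply mul_left_cancel₀ h2
    rw [hrx] at h
    linear_combination h
  rw [← hx, abs_le]
  constructor
  · have h1 : 16 * x ^ 2 ≤ (4 * N + 1) * (4 * N + 3) := by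
      have h := key N
      have h2 := mul_le_mul_of_nonneg_right (hN (N + 1)) (by positivity : 0 ≤ 16 * x ^ 2)
      rw [h] at h2
      exact le_of_mul_le_mul_left h2 (hpos N)
    by_contra! hc
    have : (N : ℝ) + 1 < x := by linarith
    nlinarith [(Nat.cast_nonneg N : (0 : ℝ) ≤ N)]
  · rcases N with _ | M
    · push_cast; linarith
    · have h1 : ((4 * M + 1) * (4 * M + 3) : ℝ) ≤ 16 * x ^ 2 := by
        have h := key M
        have h2 := mul_le_mul_of_nonneg_right (hN M)
          (by positivity : (0 : ℝ) ≤ (4 * M + 1) * (4 * M + 3))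
        rw [← h] at h2
        exact le_of_mul_le_mul_left h2 (hpos _)
      push_cast
      by_contra! hc
      nlinarith [(Nat.cast_nonneg M : (0 : ℝ) ≤ M)]
end

section
/- Let u_n : ℝ → ℂ be defined by u_n(x) = (-1)^n (4n)! / (2^{4n}(2n)!) · ((x-i)^{-(2n+1/2)} + (x+i)^{-(2n+1/2)}) with principal-branch complex powers. Then u_n(0) = √2 · (4n)! / (2^{4n} (2n)!) (a positive real number), and for every real ε > 0 the sequence ε^{2n} u_n(0) tends to +∞ as n → ∞; in particular the asymptotic series Σ_{n≥0} ε^{2n} u_n(0) diverges for every ε > 0. -/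
open Complex Filter

/-- The terms of the asymptotic power series solution of
`ε² u'' + u = (x+i)^{-1/2} + (x-i)^{-1/2}`. -/
noncomputable def uTerm (n : ℕ) (x : ℝ) : ℂ :=
  (-1) ^ n * (Nat.factorial (4 * n) : ℂ) / (2 ^ (4 * n) * (Nat.factorial (2 * n) : ℂ)) *
    (((x : ℂ) - I) ^ (-(2 * (n : ℂ) + 1 / 2)) + ((x : ℂ) + I) ^ (-(2 * (n : ℂ) + 1 / 2)))

theorem uTerm_aux (n : ℕ) :
    (((0 : ℝ) : ℂ) - I) ^ (-(2 * (n : ℂ) + 1 / 2)) + (((0 : ℝ) : ℂ) + I) ^ (-(2 * (n : ℂ) + 1 / 2))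
      = (-1) ^ n * ((Real.sqrt 2 : ℝ) : ℂ) := by
  have h1 : Complex.exp (n * (Real.pi * I)) = (-1) ^ n := by
    rw [Complex.exp_nat_mul, Complex.exp_pi_mul_I]
  have h2 : Complex.exp (-(n * (Real.pi * I))) = (-1) ^ n := by
    rw [Complex.exp_neg, h1, ← inv_pow]; norm_num
  have h3 : Complex.exp ((Real.pi / 4 : ℝ) * I) + Complex.exp (-(Real.pi / 4 : ℝ) * I)
      = ((Real.sqrt 2 : ℝ) : ℂ) := by
    rw [← Complex.two_cos, ← Complex.ofReal_cos, Real.cos_pi_div_four]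
    push_cast; ring
  rw [Complex.ofReal_zero, zero_sub, zero_add, Complex.cpow_def_of_ne_zero (neg_ne_zero.2 I_ne_zero),
    Complex.cpow_def_of_ne_zero I_ne_zero, Complex.log_I, Complex.log_neg_I, ← h3, mul_add]
  nth_rewrite 1 [← h1]
  rw [← h2, ← Complex.exp_add, ← Complex.exp_add]
  congr 2 <;> (push_cast; ring)

theorem growth_aux (ε : ℝ) (hε : 0 < ε) :
    Tendsto (fun n : ℕ =>
        Real.sqrt 2 * ε ^ (2 * n) * (Nat.factorial (4 * n) : ℝ) /
          (2 ^ (4 * n) * (Nat.factorial (2 * n) : ℝ))) atTop atTop := by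
  have h0 := FloorSemiring.tendsto_pow_div_factorial_atTop (16 / ε ^ 2)
  have h1 : Tendsto (fun n : ℕ => ((16 / ε ^ 2) ^ n / (Nat.factorial n : ℝ))⁻¹) atTop atTop := by
    apply Tendsto.inv_tendsto_nhdsGT_zero
    rw [tendsto_nhdsWithin_iff]
    refine ⟨h0, Eventually.of_forall fun n => ?_⟩
    simp only [Set.mem_Ioi]
    positivity
  refine tendsto_atTop_mono (fun n => ?_) h1
  have ha : (Nat.factorial n : ℝ) * Nat.factorial (2 * n) ≤ Nat.factorial (4 * n) := by
    have hb : Nat.factorial (2 * n) * Nat.factorial (2 * n) ≤ Nat.factorial (4 * n) := by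
      have := Nat.le_of_dvd (Nat.factorial_pos _)
        (Nat.factorial_mul_factorial_dvd_factorial_add (2 * n) (2 * n))
      rwa [show 2 * n + 2 * n = 4 * n by ring] at this
    have hc : Nat.factorial n ≤ Nat.factorial (2 * n) := Nat.factorial_le (by omega)
    exact_mod_cast (Nat.mul_le_mul_right _ hc).trans hb
  have hs : 1 ≤ Real.sqrt 2 := Real.one_le_sqrt.2 (by norm_num)
  have he : ((16 / ε ^ 2) ^ n / (Nat.factorial n : ℝ))⁻¹
      = ε ^ (2 * n) * Nat.factorial n / 2 ^ (4 * n) := by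
    rw [pow_mul, pow_mul, div_pow]
    norm_num
    field_simp
  rw [he, div_le_div_iff₀ (by positivity) (by positivity)]
  calc ε ^ (2 * n) * (Nat.factorial n : ℝ) * (2 ^ (4 * n) * (Nat.factorial (2 * n) : ℝ))
      = 1 * (ε ^ (2 * n) * 2 ^ (4 * n) * ((Nat.factorial n : ℝ) * Nat.factorial (2 * n))) := by ring
    _ ≤ Real.sqrt 2 * (ε ^ (2 * n) * 2 ^ (4 * n) * (Nat.factorial (4 * n) : ℝ)) := by gcongr
    _ = _ := by ring

theorem uTerm_zero (n : ℕ) : uTerm n 0 =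
      ((Real.sqrt 2 * (Nat.factorial (4 * n) : ℝ) /
        (2 ^ (4 * n) * (Nat.factorial (2 * n) : ℝ)) : ℝ) : ℂ) := by
  have h : ((-1 : ℂ) ^ n) * (-1) ^ n = 1 := by rw [← mul_pow]; norm_num
  rw [uTerm, uTerm_aux]
  push_cast
  linear_combination ((Nat.factorial (4 * n) : ℂ) / (2 ^ (4 * n) * (Nat.factorial (2 * n) : ℂ)) *
    ((Real.sqrt 2 : ℝ) : ℂ)) * h

/-- At `x = 0` the series terms are the positive reals `√2 (4n)!/(2^{4n}(2n)!)`, and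
for every `ε > 0` the sequence `ε^{2n} u_n(0)` tends to `+∞`: the asymptotic series
diverges at `x = 0` for every `ε > 0`. -/
theorem series_diverges :
    (∀ n : ℕ, uTerm n 0 =
      ((Real.sqrt 2 * (Nat.factorial (4 * n) : ℝ) /
        (2 ^ (4 * n) * (Nat.factorial (2 * n) : ℝ)) : ℝ) : ℂ)) ∧
    (∀ ε : ℝ, 0 < ε →
      Tendsto (fun n : ℕ =>
        Real.sqrt 2 * ε ^ (2 * n) * (Nat.factorial (4 * n) : ℝ) /
          (2 ^ (4 * n) * (Nat.factorial (2 * n) : ℝ))) atTop atTop ∧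
      Tendsto (fun n : ℕ => ‖(ε : ℂ) ^ (2 * n) * uTerm n 0‖) atTop atTop) := by
  refine ⟨uTerm_zero, fun ε hε => ⟨growth_aux ε hε, ?_⟩⟩
  refine (growth_aux ε hε).congr fun n => ?_
  rw [uTerm_zero, ← Complex.ofReal_pow, ← Complex.ofReal_mul, Complex.norm_real,
    Real.norm_of_nonneg (by positivity)]
  ring
end

section
/- Let r > 0. For any sequence (ε_k) of positive reals with ε_k → 0 and any sequence (N_k) of natural numbers with 0 ≤ N_k - r/(2 ε_k) < 1 for all k, one has lim_{k→∞} e^{r/ε_k} · ε_k^{2 N_k} (4 N_k)! / (2^{4 N_k} (2 N_k)! · r^{2 N_k}) = √2. That is, at the optimal truncation point N = r/(2ε) + ω with ω ∈ [0,1), the optimally truncated term ε^{2N} (4N)!/(2^{4N}(2N)! r^{2N}) is asymptotic to √2 · e^{-r/ε} as ε → 0, independently of ω. -/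
open Filter

lemma aux_fact (n : ℕ) (hn : 0 < n) (ε r : ℝ) (hε : 0 < ε) (hr : 0 < r) :
    Real.exp (r / ε) * (ε ^ (2 * n) * (Nat.factorial (4 * n) : ℝ) /
        (2 ^ (4 * n) * (Nat.factorial (2 * n) : ℝ) * r ^ (2 * n))) =
    Real.sqrt 2 * (Stirling.stirlingSeq (4 * n) / Stirling.stirlingSeq (2 * n)) *
      Real.exp (2 * n * Real.log (n / (r / (2 * ε))) - 2 * (n - r / (2 * ε))) := by
  have hn' : (0:ℝ) < n := by exact_mod_cast hn
  have h1 : Real.exp (2 * n * Real.log (n / (r / (2 * ε))) - 2 * (n - r / (2 * ε)))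
      = (n / (r / (2 * ε))) ^ (2 * n) * Real.exp (r / ε) / (Real.exp 1) ^ (2 * n) := by
    have hp : (0:ℝ) < n / (r / (2 * ε)) := by positivity
    rw [← Real.exp_nat_mul]
    have : ((n:ℝ) / (r / (2 * ε))) ^ (2 * n)
        = Real.exp (2 * n * Real.log (n / (r / (2 * ε)))) := by
      have := Real.exp_nat_mul (Real.log (n / (r / (2 * ε)))) (2 * n)
      rw [Real.exp_log hp] at this
      rw [← this]; push_cast; rfl
    rw [this, ← Real.exp_add, ← Real.exp_sub]
    congr 1
    push_cast
    field_simp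
    ring
  rw [h1]
  unfold Stirling.stirlingSeq
  have h2 : ((4 * n : ℕ) / Real.exp 1 : ℝ) ^ (4 * n)
      = 2 ^ (4 * n) * (((2 * n : ℕ) / Real.exp 1 : ℝ) ^ (2 * n)) ^ 2 := by
    rw [← pow_mul, show 2 * n * 2 = 4 * n by ring, ← mul_pow]
    congr 1
    push_cast; ring
  have h3 : ((2 * n : ℕ) / Real.exp 1 : ℝ) ^ (2 * n)
      = (n / (r / (2 * ε))) ^ (2 * n) / (Real.exp 1) ^ (2 * n) * (r ^ (2 * n) / ε ^ (2 * n)) := by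
    rw [← div_pow, ← div_pow, ← mul_pow]
    congr 1
    push_cast; field_simp
  have h4 : Real.sqrt (2 * (4 * n : ℕ)) = Real.sqrt 2 * Real.sqrt (2 * (2 * n : ℕ)) := by
    rw [← Real.sqrt_mul (by norm_num)]
    congr 1
    push_cast; ring
  have h5 : 0 < Real.sqrt (2 * (2 * n : ℕ)) := Real.sqrt_pos.2 (by push_cast; positivity)
  rw [h2, h4, h3]
  have hA : (0:ℝ) < (n / (r / (2 * ε))) ^ (2 * n) := by positivity
  have hB : (0:ℝ) < (Real.exp 1) ^ (2 * n) := by positivity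
  have hC : (0:ℝ) < r ^ (2 * n) := by positivity
  have hD : (0:ℝ) < ε ^ (2 * n) := by positivity
  have hE : (0:ℝ) < 2 ^ (4 * n) := by positivity
  have hF : (0:ℝ) < (Nat.factorial (2 * n) : ℝ) := by positivity
  have hG : (0:ℝ) < Real.sqrt 2 := by positivity
  generalize ((n:ℝ) / (r / (2 * ε))) ^ (2 * n) = A at *
  generalize (Real.exp 1) ^ (2 * n) = B at *
  generalize r ^ (2 * n) = C at *
  generalize ε ^ (2 * n) = D at *
  generalize (2:ℝ) ^ (4 * n) = E at *
  generalize (Nat.factorial (2 * n) : ℝ) = F at *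
  generalize Real.sqrt (2 * (2 * n : ℕ)) = G at *
  generalize Real.sqrt 2 = H at *
  generalize Real.exp (r / ε) = I at *
  field_simp

/-- At the optimal truncation point `N = r/(2ε) + ω`, `ω ∈ [0,1)`, the optimally
truncated term `ε^{2N}(4N)!/(2^{4N}(2N)! r^{2N})` is asymptotic to `√2 e^{-r/ε}`
as `ε → 0`, independently of `ω`. -/
theorem optimally_truncated_term (r : ℝ) (hr : 0 < r)
    (ε : ℕ → ℝ) (hε : ∀ k, 0 < ε k) (hε0 : Tendsto ε atTop (nhds 0))
    (N : ℕ → ℕ)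
    (hN : ∀ k, 0 ≤ (N k : ℝ) - r / (2 * ε k) ∧ (N k : ℝ) - r / (2 * ε k) < 1) :
    Tendsto (fun k =>
      Real.exp (r / ε k) * ((ε k) ^ (2 * N k) * (Nat.factorial (4 * N k) : ℝ) /
        (2 ^ (4 * N k) * (Nat.factorial (2 * N k) : ℝ) * r ^ (2 * N k))))
      atTop (nhds (Real.sqrt 2)) := by
  set x : ℕ → ℝ := fun k => r / (2 * ε k) with hx
  have hxpos : ∀ k, 0 < x k := fun k => by have := hε k; simp only [hx]; positivity
  have hNpos : ∀ k, 0 < N k := fun k => by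
    have h1 : 0 < r / (2 * ε k) := hxpos k
    have h2 := (hN k).1
    have : (0:ℝ) < N k := by linarith
    exact_mod_cast this
  have hxinv : Tendsto (fun k => 2 / x k) atTop (nhds 0) := by
    have : Tendsto (fun k => (4 / r) * ε k) atTop (nhds 0) := by
      simpa using hε0.const_mul (4 / r)
    refine this.congr fun k => ?_
    have := hε k
    simp only [hx]; field_simp; norm_num
  have hxtop : Tendsto x atTop atTop := by
    have h0 : Tendsto ε atTop (nhdsWithin 0 (Set.Ioi 0)) :=
      tendsto_nhdsWithin_iff.2 ⟨hε0, Eventually.of_forall hε⟩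
    have h1 := (tendsto_inv_nhdsGT_zero.comp h0).const_mul_atTop (show 0 < r / 2 by positivity)
    refine h1.congr fun k => ?_
    have := hε k
    simp only [hx, Function.comp]; field_simp
  have hNtop : Tendsto N atTop atTop := by
    rw [← tendsto_natCast_atTop_iff (R := ℝ)]
    refine tendsto_atTop_mono (fun k => ?_) hxtop
    have := (hN k).1
    simp only [hx]; linarith
  have hexp : Tendsto (fun k => 2 * (N k : ℝ) * Real.log (N k / x k) - 2 * (N k - x k))
      atTop (nhds 0) := by
    refine tendsto_of_tendsto_of_tendsto_of_le_of_le tendsto_const_nhds hxinv (fun k => ?_)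
      (fun k => ?_)
    · have h1 := hxpos k
      have h2 : (0:ℝ) < N k := by exact_mod_cast hNpos k
      have h3 := Real.one_sub_inv_le_log_of_pos (div_pos h2 h1)
      have h4 := mul_le_mul_of_nonneg_left h3 (show 0 ≤ 2 * (N k : ℝ) by positivity)
      have h5 : 2 * (N k : ℝ) * (1 - (N k / x k)⁻¹) = 2 * (N k - x k) := by field_simp
      show 0 ≤ _
      linarith
    · have h1 := hxpos k
      have h2 : (0:ℝ) < N k := by exact_mod_cast hNpos k
      have h3 := Real.log_le_sub_one_of_pos (div_pos h2 h1)
      have h4 := mul_le_mul_of_nonneg_left h3 (show 0 ≤ 2 * (N k : ℝ) by positivity)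
      have h5 : 2 * (N k : ℝ) * (N k / x k - 1) - 2 * (N k - x k)
          = 2 * (N k - x k) ^ 2 / x k := by field_simp
      have h6 : 0 ≤ (N k : ℝ) - x k := (hN k).1
      have h7 : (N k : ℝ) - x k < 1 := (hN k).2
      have h8 : 2 * ((N k : ℝ) - x k) ^ 2 / x k ≤ 2 / x k := by
        gcongr
        nlinarith
      show 2 * (N k : ℝ) * Real.log (N k / x k) - 2 * (N k - x k) ≤ 2 / x k
      linarith
  have hpi : Real.sqrt Real.pi ≠ 0 := (Real.sqrt_pos.2 Real.pi_pos).ne'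
  have hs4 := Stirling.tendsto_stirlingSeq_sqrt_pi.comp
    (hNtop.const_mul_atTop' (show 0 < 4 by norm_num))
  have hs2 := Stirling.tendsto_stirlingSeq_sqrt_pi.comp
    (hNtop.const_mul_atTop' (show 0 < 2 by norm_num))
  have hfin := ((hs4.div hs2 hpi).const_mul (Real.sqrt 2)).mul
    ((Real.continuous_exp.tendsto 0).comp hexp)
  rw [div_self hpi, Real.exp_zero, mul_one, mul_one] at hfin
  refine hfin.congr fun k => ?_
  rw [aux_fact (N k) (hNpos k) (ε k) r (hε k) hr]
  rfl
end

section
/- Let r > 0. For any sequence (ε_k) of positive reals with ε_k → 0 and any sequence (N_k) of natural numbers with 0 ≤ N_k - r/(2 ε_k) < 1 for all k, one has lim_{k→∞} e^{r/ε_k} · √(ε_k/r) · ε_k^{2 N_k} (2 N_k)! / r^{2 N_k} = √(2π). That is, for the rationally approximated problem the optimally truncated term ε^{2N}(2N)!/r^{2N+1} is asymptotic to √(2π/(rε)) · e^{-r/ε} as ε → 0. -/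
open Filter

lemma aux_eq (x : ℝ) (hx : 0 < x) (m : ℕ) (hm : 0 < m) :
    Real.exp x * Real.sqrt (1 / x) * ((Nat.factorial m : ℝ) / x ^ m) =
      Stirling.stirlingSeq m * (Real.sqrt 2 * Real.sqrt ((m:ℝ) / x) *
        Real.exp (m * Real.log ((m:ℝ) / x) - (m - x))) := by
  have hm' : (0:ℝ) < m := by exact_mod_cast hm
  have h1 : Real.exp (m * Real.log ((m:ℝ) / x) - (m - x))
      = ((m:ℝ) / x) ^ m * Real.exp x / (Real.exp 1) ^ m := by
    rw [show (m * Real.log ((m:ℝ) / x) - (m - x)) = m * Real.log ((m:ℝ) / x) + x - m * 1 by ring,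
      Real.exp_sub, Real.exp_add, Real.exp_nat_mul, Real.exp_nat_mul, Real.exp_log (by positivity)]
  rw [h1, Stirling.stirlingSeq, Real.sqrt_mul (by norm_num), Real.sqrt_div hm'.le,
    Real.sqrt_div zero_le_one, Real.sqrt_one]
  have := Real.sqrt_pos.2 hm'
  have := Real.sqrt_pos.2 hx
  have := Real.exp_pos 1
  simp only [div_pow]
  field_simp

/-- For the rationally approximated (simple-pole) problem, at the optimal truncation
point `N = r/(2ε) + ω`, `ω ∈ [0,1)`, the optimally truncated term
`ε^{2N}(2N)!/r^{2N+1}` is asymptotic to `√(2π/(rε)) e^{-r/ε}` as `ε → 0`: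
`e^{r/ε} √(ε/r) ε^{2N}(2N)!/r^{2N} → √(2π)`. -/
theorem aaa_optimally_truncated_term (r : ℝ) (hr : 0 < r)
    (ε : ℕ → ℝ) (hε : ∀ k, 0 < ε k) (hε0 : Tendsto ε atTop (nhds 0))
    (N : ℕ → ℕ)
    (hN : ∀ k, 0 ≤ (N k : ℝ) - r / (2 * ε k) ∧ (N k : ℝ) - r / (2 * ε k) < 1) :
    Tendsto (fun k =>
      Real.exp (r / ε k) * Real.sqrt (ε k / r) *
        ((ε k) ^ (2 * N k) * (Nat.factorial (2 * N k) : ℝ) / r ^ (2 * N k)))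
      atTop (nhds (Real.sqrt (2 * Real.pi))) := by
  obtain ⟨x, hxdef⟩ : ∃ x : ℕ → ℝ, ∀ k, x k = r / ε k := ⟨_, fun _ => rfl⟩
  obtain ⟨m, hmdef⟩ : ∃ m : ℕ → ℕ, ∀ k, m k = 2 * N k := ⟨_, fun _ => rfl⟩
  have hx : ∀ k, 0 < x k := fun k => by rw [hxdef]; exact div_pos hr (hε k)
  have hd : ∀ k, 0 ≤ (m k : ℝ) - x k ∧ (m k : ℝ) - x k < 2 := fun k => by
    have h := hN k
    have e : r / (2 * ε k) = x k / 2 := by rw [hxdef, div_div, mul_comm]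
    rw [e] at h
    rw [hmdef]; push_cast
    constructor <;> linarith [h.1, h.2]
  have hm' : ∀ k, (0:ℝ) < m k := fun k => by linarith [hx k, (hd k).1]
  have hm : ∀ k, 0 < m k := fun k => by exact_mod_cast hm' k
  have hinv : Tendsto (fun k => 1 / x k) atTop (nhds 0) := by
    have := hε0.div_const r
    simpa [hxdef] using this
  have hxtop : Tendsto x atTop atTop := by
    have h : Tendsto (fun k => 1 / x k) atTop (nhdsWithin 0 (Set.Ioi 0)) :=
      tendsto_nhdsWithin_iff.2 ⟨hinv, Eventually.of_forall fun k => one_div_pos.2 (hx k)⟩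
    exact h.inv_tendsto_nhdsGT_zero.congr fun k => by simp
  have hmtop : Tendsto m atTop atTop := by
    rw [← tendsto_natCast_atTop_iff (R := ℝ)]
    exact tendsto_atTop_mono (fun k => by linarith [(hd k).1]) hxtop
  have hratio : Tendsto (fun k => (m k : ℝ) / x k) atTop (nhds 1) := by
    refine tendsto_of_tendsto_of_tendsto_of_le_of_le (g := fun _ => (1:ℝ))
      (h := fun k => 1 + 2 * (1 / x k)) tendsto_const_nhds ?_ ?_ ?_
    · simpa using (hinv.const_mul 2).const_add 1
    · intro k
      simp only
      rw [le_div_iff₀ (hx k)]; linarith [(hd k).1]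
    · intro k
      simp only
      rw [div_le_iff₀ (hx k)]
      have := (hx k).ne'
      have e : (1 + 2 * (1 / x k)) * x k = x k + 2 := by field_simp
      rw [e]; linarith [(hd k).2]
  have hexpo : Tendsto (fun k => (m k : ℝ) * Real.log ((m k:ℝ) / x k) - (m k - x k))
      atTop (nhds 0) := by
    refine tendsto_of_tendsto_of_tendsto_of_le_of_le (g := fun _ => (0:ℝ))
      (h := fun k => 4 * (1 / x k)) tendsto_const_nhds ?_ ?_ ?_
    · simpa using hinv.const_mul 4
    · intro k
      simp only
      have h := Real.one_sub_inv_le_log_of_pos (div_pos (hm' k) (hx k))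
      have h2 := mul_le_mul_of_nonneg_left h (hm' k).le
      have := (hx k).ne'
      have := (hm' k).ne'
      have e : (m k : ℝ) * (1 - ((m k : ℝ) / x k)⁻¹) = m k - x k := by field_simp
      linarith
    · intro k
      simp only
      have h := Real.log_le_sub_one_of_pos (div_pos (hm' k) (hx k))
      have h2 := mul_le_mul_of_nonneg_left h (hm' k).le
      have := (hx k).ne'
      have e : (m k : ℝ) * ((m k : ℝ) / x k - 1) - (m k - x k) = (m k - x k)^2 * (1 / x k) := by
        field_simp
      have h4 : ((m k : ℝ) - x k)^2 ≤ 4 := by nlinarith [(hd k).1, (hd k).2]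
      have h5 := mul_le_mul_of_nonneg_right h4 (one_div_pos.2 (hx k)).le
      linarith
  have key := (Stirling.tendsto_stirlingSeq_sqrt_pi.comp hmtop).mul
    ((hratio.sqrt.const_mul (Real.sqrt 2)).mul ((Real.continuous_exp.tendsto 0).comp hexpo))
  have e : Real.sqrt Real.pi * (Real.sqrt 2 * Real.sqrt 1 * Real.exp 0)
      = Real.sqrt (2 * Real.pi) := by
    rw [Real.sqrt_mul (by norm_num)]; simp [mul_comm]
  rw [e] at key
  refine key.congr fun k => ?_
  have h := aux_eq (x k) (hx k) (m k) (hm k)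
  simp only [Function.comp]
  rw [← h, hxdef, hmdef, one_div_div, div_pow]
  have := (hε k).ne'
  congr 1
  field_simp
end
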